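/- Let f : V → [0,∞] be weakly lower semicontinuous on a separable real Hilbert space V, let A : V → W be a bounded linear operator with ‖A‖² < γ, let d ∈ W, and define 𝒥(x) = f(x) + ½‖Ax−d‖²_W and 𝒥_γ(x) = S_γ²(f)(x) + ½‖Ax−d‖²_W. Then: (i) every local minimizer x of 𝒥_γ satisfies S_γ²(f)(x) = f(x) (hence 𝒥_γ(x) = 𝒥(x)) and is a local minimizer of 𝒥; (ii) every strict local minimizer of 𝒥_γ is a strict local minimizer of 𝒥; (iii) the set of global minimizers of 𝒥_γ equals the set of global minimizers of 𝒥. -/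

import Mathlib

/-!
The function `S_γ²(f) + (γ/2)‖· - p‖²` is convex for every `p`, and it has the same lower bounds as
`f + (γ/2)‖· - p‖²`. Given a local minimizer `x` of `S_γ²(f) + ½‖A · - d‖²`, choose `p` so that
`(γ/2)‖· - p‖² - ½‖A · - d‖²` grows at least like `((γ - ‖A‖²)/2)‖· - x‖²` away from `x`. Then
`S_γ²(f) + (γ/2)‖· - p‖²` exceeds its value at `x` by a positive amount on every small sphere around
`x`, hence by convexity outside that sphere. If `S_γ²(f) x < f x`, lower semicontinuity would also
give such a gap for `f + (γ/2)‖· - p‖²` inside the sphere, so this function would have a lower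
bound above the value of `S_γ²(f) + (γ/2)‖· - p‖²` at `x`, which is impossible.
-/

open scoped InnerProductSpace RealInnerProductSpace ENNReal Topology
open Filter

noncomputable section

/-- The S-transform `S_γ(f)(y) = sup_x ( -f(x) - (γ/2)‖x-y‖² )` for
extended-real-valued functions on a real inner product space. -/
def SgammaE {V : Type*} [NormedAddCommGroup V] [InnerProductSpace ℝ V]
    (γ : ℝ) (f : V → EReal) (y : V) : EReal :=
  ⨆ x : V, (-(f x) - (((γ / 2) * ‖x - y‖ ^ 2 : ℝ) : EReal))

/-- The S-transform of a `[0,∞]`-valued function. -/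
def Sgamma {V : Type*} [NormedAddCommGroup V] [InnerProductSpace ℝ V]
    (γ : ℝ) (f : V → ℝ≥0∞) (y : V) : EReal :=
  SgammaE γ (fun x => (f x : EReal)) y

/-- The twice iterated S-transform `S_γ²(f) = S_γ(S_γ(f))`. -/
def Sgamma2 {V : Type*} [NormedAddCommGroup V] [InnerProductSpace ℝ V]
    (γ : ℝ) (f : V → ℝ≥0∞) : V → EReal :=
  SgammaE γ (Sgamma γ f)

/-- Convexity for extended-real-valued functions. -/
def EConvexOn {V : Type*} [NormedAddCommGroup V] [InnerProductSpace ℝ V]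
    (h : V → EReal) : Prop :=
  ∀ x y : V, ∀ a b : ℝ, 0 ≤ a → 0 ≤ b → a + b = 1 →
    h (a • x + b • y) ≤ (a : EReal) * h x + (b : EReal) * h y

theorem isLocalMin_of_eventually_nhdsNE_lt {X β : Type*} [TopologicalSpace X] [Preorder β]
    {h : X → β} {x : X} (hx : ∀ᶠ y in 𝓝[≠] x, h x < h y) : IsLocalMin h x := by
  rw [IsLocalMin, IsMinFilter, ← nhdsNE_sup_pure, eventually_sup, eventually_pure]
  exact ⟨hx.mono fun _ => le_of_lt, le_rfl⟩

theorem eventually_forall_mem_closedBall {X : Type*} [PseudoMetricSpace X] {x : X} {P : X → Prop}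
    (h : ∀ᶠ z in 𝓝 x, P z) : ∀ᶠ r in 𝓝[>] (0 : ℝ), ∀ z ∈ Metric.closedBall x r, P z :=
  ((tendsto_closedBall_smallSets x).mono_left nhdsWithin_le_nhds).eventually h.smallSets

theorem ereal_add_coe_le_add_coe {c s : EReal} {u v w : ℝ} (h : c ≤ s + (w : EReal))
    (huv : w + u ≤ v) : c + (u : EReal) ≤ s + (v : EReal) :=
  calc c + (u : EReal) ≤ s + (w : EReal) + (u : EReal) := by gcongr
    _ = s + ((w + u : ℝ) : EReal) := by rw [EReal.coe_add, add_assoc]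
    _ ≤ s + (v : EReal) := by gcongr

theorem ereal_iSup_add_coe {ι : Sort*} (s : ι → EReal) (u : ℝ) :
    (⨆ i, s i) + (u : EReal) = ⨆ i, (s i + (u : EReal)) := by
  refine eq_of_forall_ge_iff fun c => ?_
  have add_le_iff (a : EReal) : a + (u : EReal) ≤ c ↔ a ≤ c - (u : EReal) :=
    (EReal.le_sub_iff_add_le (.inl (EReal.coe_ne_bot u)) (.inl (EReal.coe_ne_top u))).symm
  simp only [add_le_iff, iSup_le_iff]

section Convexity

variable {V : Type*} [NormedAddCommGroup V] [InnerProductSpace ℝ V]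

theorem EConvexOn.iSup {ι : Sort*} {h : ι → V → EReal} (hh : ∀ i, EConvexOn (h i)) :
    EConvexOn fun z => ⨆ i, h i z := by
  intro x y a b ha hb hab
  refine iSup_le fun i => (hh i x y a b ha hb hab).trans ?_
  have ha' : (0 : EReal) ≤ a := EReal.coe_nonneg.2 ha
  have hb' : (0 : EReal) ≤ b := EReal.coe_nonneg.2 hb
  exact add_le_add (mul_le_mul_of_nonneg_left (le_iSup (h · x) i) ha')
    (mul_le_mul_of_nonneg_left (le_iSup (h · y) i) hb')

theorem eConvexOn_const_add_coe {l : V → ℝ} (hl : ConvexOn ℝ Set.univ l) (s : EReal) :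
    EConvexOn fun z => s + (l z : EReal) := by
  intro x y a b ha hb hab
  have hlxy : l (a • x + b • y) ≤ a * l x + b * l y :=
    hl.2 (Set.mem_univ x) (Set.mem_univ y) ha hb hab
  induction s with
  | bot => simp only [EReal.bot_add, bot_le]
  | coe s =>
    dsimp only
    norm_cast
    linear_combination hlxy + s * hab.symm
  | top =>
    simp only [EReal.top_add_coe]
    rw [← EReal.right_distrib_of_nonneg (EReal.coe_nonneg.2 ha) (EReal.coe_nonneg.2 hb),
      ← EReal.coe_add, hab, EReal.coe_one, one_mul]

theorem EConvexOn.le_of_le_on_sphere {h : V → EReal} (hh : EConvexOn h) {x : V} {r c : ℝ}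
    (hr : 0 < r) (hx : h x ≤ c) (hsphere : ∀ z ∈ Metric.sphere x r, (c : EReal) ≤ h z)
    {z : V} (hz : r ≤ ‖z - x‖) : (c : EReal) ≤ h z := by
  by_contra! hlt
  obtain ⟨b, hzb, hbc⟩ := EReal.lt_iff_exists_real_btwn.1 hlt
  have hzx : 0 < ‖z - x‖ := hr.trans_le hz
  set t := r / ‖z - x‖ with ht
  have ht₀ : 0 < t := by positivity
  have ht₁ : 0 ≤ 1 - t := sub_nonneg.2 ((div_le_one hzx).2 hz)
  have hmem : (1 - t) • x + t • z ∈ Metric.sphere x r := by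
    have hdiff : (1 - t) • x + t • z - x = t • (z - x) := by module
    rw [mem_sphere_iff_norm, hdiff, norm_smul, Real.norm_of_nonneg ht₀.le, ht,
      div_mul_cancel₀ r hzx.ne']
  have hle : (c : EReal) ≤ (((1 - t) * c + t * b : ℝ) : EReal) :=
    calc (c : EReal) ≤ h ((1 - t) • x + t • z) := hsphere _ hmem
      _ ≤ ((1 - t : ℝ) : EReal) * h x + (t : EReal) * h z :=
        hh x z (1 - t) t ht₁ ht₀.le (by ring)
      _ ≤ ((1 - t : ℝ) : EReal) * (c : EReal) + (t : EReal) * (b : EReal) :=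
        add_le_add (mul_le_mul_of_nonneg_left hx (EReal.coe_nonneg.2 ht₁))
          (mul_le_mul_of_nonneg_left hzb.le (EReal.coe_nonneg.2 ht₀.le))
      _ = (((1 - t) * c + t * b : ℝ) : EReal) := by norm_cast
  have hcb : t * c ≤ t * b := by linarith [EReal.coe_le_coe_iff.1 hle]
  exact (EReal.coe_lt_coe_iff.1 hbc).not_ge (le_of_mul_le_mul_left hcb ht₀)

end Convexity

section STransform

variable {V : Type*} [NormedAddCommGroup V] [InnerProductSpace ℝ V] {γ : ℝ} {g : V → EReal}

theorem convexOn_half_mul_norm_sub_sq_sub (γ : ℝ) (p y : V) :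
    ConvexOn ℝ Set.univ fun z => γ / 2 * ‖z - p‖ ^ 2 - γ / 2 * ‖y - z‖ ^ 2 := by
  have haffine : (fun z => γ / 2 * ‖z - p‖ ^ 2 - γ / 2 * ‖y - z‖ ^ 2) =
      fun z => innerSL ℝ (γ • (y - p)) z + γ / 2 * (‖p‖ ^ 2 - ‖y‖ ^ 2) := by
    ext z
    rw [norm_sub_sq_real, norm_sub_sq_real, innerSL_apply_apply, inner_smul_left, inner_sub_left,
      real_inner_comm p z, conj_trivial]
    ring
  rw [haffine]
  exact ((innerSL ℝ (γ • (y - p))).toLinearMap.convexOn convex_univ).add_const _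

theorem eConvexOn_SgammaE_add_half_mul_norm_sub_sq (γ : ℝ) (g : V → EReal) (p : V) :
    EConvexOn fun z => SgammaE γ g z + ((γ / 2 * ‖z - p‖ ^ 2 : ℝ) : EReal) := by
  simp only [SgammaE, ereal_iSup_add_coe]
  refine EConvexOn.iSup fun y => ?_
  convert eConvexOn_const_add_coe (convexOn_half_mul_norm_sub_sq_sub γ p y) (-g y) using 2 with z
  rw [sub_eq_add_neg, add_assoc, ← EReal.coe_neg, ← EReal.coe_add, neg_add_eq_sub]

theorem SgammaE_le_neg_iff {p : V} {c : EReal} :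
    SgammaE γ g p ≤ -c ↔ ∀ z, c ≤ g z + ((γ / 2 * ‖z - p‖ ^ 2 : ℝ) : EReal) := by
  simp only [SgammaE, iSup_le_iff]
  refine forall_congr' fun z => ?_
  rw [EReal.le_neg, EReal.neg_sub (.inr (EReal.coe_ne_bot _)) (.inr (EReal.coe_ne_top _)), neg_neg]

theorem SgammaE_SgammaE_le (γ : ℝ) (g : V → EReal) (x : V) :
    SgammaE γ (SgammaE γ g) x ≤ g x := by
  refine iSup_le fun y => EReal.sub_le_of_le_add ?_
  rw [norm_sub_rev y x]
  exact SgammaE_le_neg_iff.1 (neg_neg (SgammaE γ g y)).ge x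

theorem le_SgammaE_SgammaE_add_half_mul_norm_sub_sq {p : V} {c : EReal}
    (hc : ∀ z, c ≤ g z + ((γ / 2 * ‖z - p‖ ^ 2 : ℝ) : EReal)) (x : V) :
    c ≤ SgammaE γ (SgammaE γ g) x + ((γ / 2 * ‖x - p‖ ^ 2 : ℝ) : EReal) := by
  have hcp : c ≤ -SgammaE γ g p := EReal.le_neg_of_le_neg (SgammaE_le_neg_iff.2 hc)
  have hle : -SgammaE γ g p - ((γ / 2 * ‖p - x‖ ^ 2 : ℝ) : EReal) ≤ SgammaE γ (SgammaE γ g) x :=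
    le_iSup (fun y => -SgammaE γ g y - ((γ / 2 * ‖y - x‖ ^ 2 : ℝ) : EReal)) p
  rw [norm_sub_rev x p]
  refine hcp.trans ?_
  rwa [← EReal.sub_le_iff_le_add (.inl (EReal.coe_ne_bot _)) (.inl (EReal.coe_ne_top _))]

theorem SgammaE_SgammaE_nonneg (hγ : 0 ≤ γ) (hg : 0 ≤ g) (x : V) :
    0 ≤ SgammaE γ (SgammaE γ g) x := by
  have h := le_SgammaE_SgammaE_add_half_mul_norm_sub_sq (γ := γ) (p := x)
    (fun z => add_nonneg (hg z) (EReal.coe_nonneg.2 (by positivity))) x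
  simpa using h

theorem SgammaE_SgammaE_eq_of_lt_on_spheres {x p : V} (hg : LowerSemicontinuousAt g x)
    (hsphere : ∃ᶠ r in 𝓝[>] (0 : ℝ), ∃ c : ℝ,
      SgammaE γ (SgammaE γ g) x + ((γ / 2 * ‖x - p‖ ^ 2 : ℝ) : EReal) < c ∧
        ∀ z ∈ Metric.sphere x r,
          (c : EReal) ≤ SgammaE γ (SgammaE γ g) z + ((γ / 2 * ‖z - p‖ ^ 2 : ℝ) : EReal)) :
    SgammaE γ (SgammaE γ g) x = g x := by
  set q : V → EReal := fun z => ((γ / 2 * ‖z - p‖ ^ 2 : ℝ) : EReal)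
  refine (SgammaE_SgammaE_le γ g x).eq_of_not_lt fun hlt => ?_
  obtain ⟨e, hxe, heg⟩ :=
    EReal.lt_iff_exists_real_btwn.1 (EReal.add_lt_add_right_coe hlt (γ / 2 * ‖x - p‖ ^ 2))
  have hlsc : LowerSemicontinuousAt (fun z => g z + q z) x := by
    refine hg.add' (Continuous.lowerSemicontinuous ?_ x) ?_
    · exact continuous_coe_real_ereal.comp (by fun_prop)
    · exact EReal.continuousAt_add (.inr (EReal.coe_ne_bot _)) (.inr (EReal.coe_ne_top _))
  have hball : ∀ᶠ r in 𝓝[>] (0 : ℝ), ∀ z ∈ Metric.closedBall x r, (e : EReal) < g z + q z :=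
    eventually_forall_mem_closedBall (hlsc _ heg)
  obtain ⟨r, ⟨⟨c, hxc, hc⟩, hball⟩, hr⟩ :=
    ((hsphere.and_eventually hball).and_eventually self_mem_nhdsWithin).exists
  have hbound : ∀ z, min (e : EReal) c ≤ g z + q z := fun z => by
    rcases le_total ‖z - x‖ r with hz | hz
    · exact min_le_of_left_le (hball z (mem_closedBall_iff_norm.2 hz)).le
    · have hconv := eConvexOn_SgammaE_add_half_mul_norm_sub_sq γ (SgammaE γ g) p
      exact min_le_of_right_le ((hconv.le_of_le_on_sphere hr hxc.le hc hz).trans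
        (add_le_add_left (SgammaE_SgammaE_le γ g z) _))
  exact (lt_min hxe hxc).not_ge (le_SgammaE_SgammaE_add_half_mul_norm_sub_sq hbound x)

end STransform

section Perturbation

variable {V W : Type*} [NormedAddCommGroup V] [InnerProductSpace ℝ V]
  [NormedAddCommGroup W] [InnerProductSpace ℝ W] {γ κ : ℝ} {G : V → ℝ} {x : V}

/-- `G` lies below a paraboloid of curvature `κ` that touches its graph at `x`. This is the only
property of the smooth term `½‖A · - d‖²` that matters, with `κ = ‖A‖²`. -/
def HasUpperParaboloidAt (κ : ℝ) (G : V → ℝ) (x : V) : Prop :=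
  ∃ b : V, ∀ z, G z ≤ G x + ⟪b, z - x⟫_ℝ + κ / 2 * ‖z - x‖ ^ 2

theorem hasUpperParaboloidAt_half_norm_sq [CompleteSpace V] (A : V →L[ℝ] W) (d : W) (x : V) :
    HasUpperParaboloidAt (‖A‖ ^ 2) (fun z => 1 / 2 * ‖A z - d‖ ^ 2) x := by
  refine ⟨(InnerProductSpace.toDual ℝ V).symm (innerSL ℝ (A x - d) ∘L A), fun z => ?_⟩
  have hinner : ⟪(InnerProductSpace.toDual ℝ V).symm (innerSL ℝ (A x - d) ∘L A), z - x⟫_ℝ =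
      ⟪A x - d, A (z - x)⟫_ℝ := InnerProductSpace.toDual_symm_apply
  have hsplit : A z - d = (A x - d) + A (z - x) := by rw [map_sub]; abel
  have hop : ‖A (z - x)‖ ^ 2 ≤ ‖A‖ ^ 2 * ‖z - x‖ ^ 2 := by
    rw [← mul_pow]
    gcongr
    exact A.le_opNorm _
  dsimp only
  rw [hinner, hsplit, norm_add_sq_real]
  linarith

theorem HasUpperParaboloidAt.exists_vertex (hG : HasUpperParaboloidAt κ G x) (hγ : γ ≠ 0) :
    ∃ p : V, ∀ z, G z - G x + (γ - κ) / 2 * ‖z - x‖ ^ 2 ≤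
      γ / 2 * ‖z - p‖ ^ 2 - γ / 2 * ‖x - p‖ ^ 2 := by
  obtain ⟨b, hb⟩ := hG
  refine ⟨x - γ⁻¹ • b, fun z => ?_⟩
  have hsplit : z - (x - γ⁻¹ • b) = (z - x) + γ⁻¹ • b := by abel
  have hcancel : γ / 2 * (2 * (γ⁻¹ * ⟪b, z - x⟫_ℝ)) = ⟪b, z - x⟫_ℝ := by field_simp
  rw [hsplit, sub_sub_cancel, norm_add_sq_real, inner_smul_right, real_inner_comm]
  linarith [hb z]

theorem HasUpperParaboloidAt.le_SgammaE_SgammaE_add {g : V → EReal}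
    (hG : HasUpperParaboloidAt κ G x) (hγ : γ ≠ 0) (hκ : κ ≤ γ) {c : EReal}
    (hc : ∀ z, c ≤ g z + (G z : EReal)) :
    c ≤ SgammaE γ (SgammaE γ g) x + (G x : EReal) := by
  obtain ⟨p, hp⟩ := hG.exists_vertex hγ
  set u : ℝ := γ / 2 * ‖x - p‖ ^ 2 - G x with hu
  have hbound : ∀ z, c + (u : EReal) ≤ g z + ((γ / 2 * ‖z - p‖ ^ 2 : ℝ) : EReal) := fun z => by
    have hgap : 0 ≤ (γ - κ) / 2 * ‖z - x‖ ^ 2 := mul_nonneg (by linarith) (sq_nonneg _)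
    exact ereal_add_coe_le_add_coe (hc z) (by linarith [hp z])
  have hx : c + (u : EReal) + ((-u : ℝ) : EReal) ≤ SgammaE γ (SgammaE γ g) x + (G x : EReal) :=
    ereal_add_coe_le_add_coe (le_SgammaE_SgammaE_add_half_mul_norm_sub_sq hbound x)
      (by linarith)
  rwa [add_assoc, ← EReal.coe_add, add_neg_cancel, EReal.coe_zero, add_zero] at hx

theorem SgammaE_SgammaE_eq_of_isLocalMin_add {g : V → EReal} (hg : LowerSemicontinuousAt g x)
    (hγ : γ ≠ 0) (hκ : κ < γ) (hG : HasUpperParaboloidAt κ G x)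
    (hbot : SgammaE γ (SgammaE γ g) x ≠ ⊥)
    (hmin : IsLocalMin (fun z => SgammaE γ (SgammaE γ g) z + (G z : EReal)) x) :
    SgammaE γ (SgammaE γ g) x = g x := by
  rcases eq_or_ne (SgammaE γ (SgammaE γ g) x) ⊤ with htop | htop
  · exact htop.trans (top_le_iff.1 (htop ▸ SgammaE_SgammaE_le γ g x)).symm
  obtain ⟨p, hp⟩ := hG.exists_vertex hγ
  obtain ⟨a, ha⟩ : ∃ a : ℝ, (a : EReal) = SgammaE γ (SgammaE γ g) x :=
    ⟨_, EReal.coe_toReal htop hbot⟩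
  have hball : ∀ᶠ r in 𝓝[>] (0 : ℝ), ∀ z ∈ Metric.closedBall x r,
      SgammaE γ (SgammaE γ g) x + (G x : EReal) ≤ SgammaE γ (SgammaE γ g) z + (G z : EReal) :=
    eventually_forall_mem_closedBall hmin
  refine SgammaE_SgammaE_eq_of_lt_on_spheres (p := p) hg (Eventually.frequently ?_)
  filter_upwards [hball, self_mem_nhdsWithin] with r hr hr₀
  have hgap : 0 < (γ - κ) / 2 * r ^ 2 := mul_pos (by linarith) (pow_pos hr₀ 2)
  refine ⟨a + γ / 2 * ‖x - p‖ ^ 2 + (γ - κ) / 2 * r ^ 2, ?_, fun z hz => ?_⟩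
  · rw [← ha]
    norm_cast
    linarith
  · have hrise : G z + (γ / 2 * ‖x - p‖ ^ 2 + (γ - κ) / 2 * r ^ 2 - G x) ≤ γ / 2 * ‖z - p‖ ^ 2 := by
      rw [← mem_sphere_iff_norm.1 hz]
      linarith [hp z]
    have hle := ereal_add_coe_le_add_coe (hr z (Metric.sphere_subset_closedBall hz)) hrise
    rw [← ha] at hle
    norm_cast at hle ⊢
    convert hle using 2
    ring

theorem statement17_general {f : V → ℝ≥0∞} (hf : LowerSemicontinuous f) (hγ : 0 < γ) (hκ : κ < γ)
    (hG : ∀ x, HasUpperParaboloidAt κ G x) :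
    (∀ x, IsLocalMin (fun z => Sgamma2 γ f z + (G z : EReal)) x →
      Sgamma2 γ f x = (f x : EReal) ∧ IsLocalMin (fun z => (f z : EReal) + (G z : EReal)) x) ∧
    (∀ x, (∀ᶠ y in 𝓝[≠] x, Sgamma2 γ f x + (G x : EReal) < Sgamma2 γ f y + (G y : EReal)) →
      ∀ᶠ y in 𝓝[≠] x, (f x : EReal) + (G x : EReal) < (f y : EReal) + (G y : EReal)) ∧
    {x | ∀ y, Sgamma2 γ f x + (G x : EReal) ≤ Sgamma2 γ f y + (G y : EReal)} =
      {x | ∀ y, (f x : EReal) + (G x : EReal) ≤ (f y : EReal) + (G y : EReal)} := by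
  have hlsc : LowerSemicontinuous fun z => (f z : EReal) :=
    continuous_coe_ennreal_ereal.comp_lowerSemicontinuous hf fun _ _ =>
      EReal.coe_ennreal_le_coe_ennreal_iff.2
  have hle (z : V) : Sgamma2 γ f z + (G z : EReal) ≤ (f z : EReal) + (G z : EReal) :=
    add_le_add_left (SgammaE_SgammaE_le γ _ z) _
  have hbot (x : V) : Sgamma2 γ f x ≠ ⊥ :=
    (EReal.bot_lt_zero.trans_le
      (SgammaE_SgammaE_nonneg hγ.le (fun z => EReal.coe_ennreal_nonneg (f z)) x)).ne'
  have heq {x : V} (hmin : IsLocalMin (fun z => Sgamma2 γ f z + (G z : EReal)) x) :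
      Sgamma2 γ f x = (f x : EReal) :=
    SgammaE_SgammaE_eq_of_isLocalMin_add (hlsc x) hγ.ne' hκ (hG x) (hbot x) hmin
  refine ⟨fun x hx => ⟨heq hx, ?_⟩, fun x hx => ?_,
    Set.Subset.antisymm (fun x hx y => ?_) fun x hx y => ?_⟩
  · filter_upwards [hx] with y hy
    exact heq hx ▸ hy.trans (hle y)
  · filter_upwards [hx] with y hy
    exact heq (isLocalMin_of_eventually_nhdsNE_lt hx) ▸ hy.trans_le (hle y)
  · exact heq (Eventually.of_forall hx) ▸ (hx y).trans (hle y)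
  · exact (hle x).trans ((hG y).le_SgammaE_SgammaE_add hγ.ne' hκ.le hx)

end Perturbation

/-- case `‖A‖² < γ`. With `f` weakly l.s.c., `𝒥(x) = f(x) + ½‖Ax-d‖²` and
`𝒥_γ(x) = S_γ²(f)(x) + ½‖Ax-d‖²`: (i) every local minimizer `x` of `𝒥_γ` satisfies
`S_γ²(f)(x) = f(x)` and is a local minimizer of `𝒥`; (ii) every strict local minimizer of `𝒥_γ`
is a strict local minimizer of `𝒥`; (iii) the global minimizers of `𝒥_γ` and `𝒥` coincide. -/
theorem statement17 {V W : Type*}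
    [NormedAddCommGroup V] [InnerProductSpace ℝ V] [CompleteSpace V]
    [TopologicalSpace.SeparableSpace V]
    [NormedAddCommGroup W] [InnerProductSpace ℝ W] [CompleteSpace W]
    [TopologicalSpace.SeparableSpace W]
    (f : V → ℝ≥0∞) (hwlsc : LowerSemicontinuous (α := WeakSpace ℝ V) f)
    (A : V →L[ℝ] W) (d : W) (γ : ℝ) (hA : ‖A‖ ^ 2 < γ) :
    (∀ x : V,
      (∃ U ∈ nhds x, ∀ y ∈ U,
          Sgamma2 γ f x + ((1 / 2 * ‖A x - d‖ ^ 2 : ℝ) : EReal) ≤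
            Sgamma2 γ f y + ((1 / 2 * ‖A y - d‖ ^ 2 : ℝ) : EReal)) →
      Sgamma2 γ f x = (f x : EReal) ∧
      ∃ U ∈ nhds x, ∀ y ∈ U,
          (f x : EReal) + ((1 / 2 * ‖A x - d‖ ^ 2 : ℝ) : EReal) ≤
            (f y : EReal) + ((1 / 2 * ‖A y - d‖ ^ 2 : ℝ) : EReal)) ∧
    (∀ x : V,
      (∃ U ∈ nhds x, ∀ y ∈ U, y ≠ x →
          Sgamma2 γ f x + ((1 / 2 * ‖A x - d‖ ^ 2 : ℝ) : EReal) <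
            Sgamma2 γ f y + ((1 / 2 * ‖A y - d‖ ^ 2 : ℝ) : EReal)) →
      ∃ U ∈ nhds x, ∀ y ∈ U, y ≠ x →
          (f x : EReal) + ((1 / 2 * ‖A x - d‖ ^ 2 : ℝ) : EReal) <
            (f y : EReal) + ((1 / 2 * ‖A y - d‖ ^ 2 : ℝ) : EReal)) ∧
    ({x : V | ∀ y : V,
        Sgamma2 γ f x + ((1 / 2 * ‖A x - d‖ ^ 2 : ℝ) : EReal) ≤
          Sgamma2 γ f y + ((1 / 2 * ‖A y - d‖ ^ 2 : ℝ) : EReal)} =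
      {x : V | ∀ y : V,
        (f x : EReal) + ((1 / 2 * ‖A x - d‖ ^ 2 : ℝ) : EReal) ≤
          (f y : EReal) + ((1 / 2 * ‖A y - d‖ ^ 2 : ℝ) : EReal)}) := by
  have hf : LowerSemicontinuous f := hwlsc.comp (toWeakSpaceCLM ℝ V).continuous
  simp only [← eventually_iff_exists_mem]
  simpa only [IsLocalMin, IsMinFilter, eventually_nhdsWithin_iff, Set.mem_compl_singleton_iff]
    using statement17_general hf ((sq_nonneg _).trans_lt hA) hA
      (hasUpperParaboloidAt_half_norm_sq A d)
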